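/- There exists an absolute constant c > 0 such that the following holds. Let S be a subset of {1, ..., n} and let v be a random vector uniformly distributed on the unit sphere S^{n-1} of R^n. Then for any t > 0, with probability at least 1 - exp(-c n) - 4 exp(-t), one has | ||v||_S^2 - |S|/n | <= (8/n)(sqrt(n t) + t). -/

import Mathlib

open MeasureTheory

/-- A measure `μ` on `ℝⁿ` is the uniform (rotation-invariant) probability distribution on the
unit sphere `S^{n-1}`. -/
def IsUniformOnSphere {n : ℕ} (μ : Measure (EuclideanSpace ℝ (Fin n))) : Prop :=
  IsProbabilityMeasure μ ∧
  μ (Metric.sphere (0 : EuclideanSpace ℝ (Fin n)) 1) = 1 ∧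
  ∀ O : EuclideanSpace ℝ (Fin n) ≃ₗᵢ[ℝ] EuclideanSpace ℝ (Fin n),
    Measure.map O μ = μ

/-!
Let `γ` be the standard Gaussian measure. If `g ∼ γ` and `x` is an independent uniform point of the
sphere, then `‖g‖ • x ∼ γ`. Hence a cone has no larger measure on the sphere than under `γ`. On the
sphere `∑ xᵢ² = 1`, so for weights `b` with `∑ bᵢ = 0` the event `ε ≤ ∑ bᵢ xᵢ²` is the cone
`0 ≤ ∑ (bᵢ - ε) xᵢ²`, whose Gaussian measure is controlled by Chernoff's bound, the coordinates
being independent under `γ`. No deviation `ε > 1` occurs, which is why the resulting tail is purely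
sub-Gaussian and needs no exceptional event of probability `exp (-c n)`.
-/

section RotationInvariance

open ProbabilityTheory

variable {E : Type*} [NormedAddCommGroup E] [InnerProductSpace ℝ E] [MeasurableSpace E]

/-- Invariance of a measure on an inner product space under all linear isometries, reflections
included; it is the invariance property of the uniform distribution on a sphere. -/
def IsRotationInvariant (μ : Measure E) : Prop :=
  ∀ O : E ≃ₗᵢ[ℝ] E, μ.map O = μ

variable [BorelSpace E] {μ ν : Measure E}

lemma isRotationInvariant_stdGaussian [FiniteDimensional ℝ E] :
    IsRotationInvariant (stdGaussian E) :=
  stdGaussian_map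

lemma IsRotationInvariant.charFun_eq_of_norm_eq (hμ : IsRotationInvariant μ) {a b : E}
    (hab : ‖a‖ = ‖b‖) : charFun μ a = charFun μ b := by
  let O := (Submodule.span ℝ {b - a})ᗮ.reflection
  have hOb : O b = a := Submodule.reflection_sub hab.symm
  calc charFun μ a = charFun (μ.map O) (O b) := by rw [hμ O, hOb]
    _ = charFun μ b := by
      have hO : MeasurableEmbedding O := O.toHomeomorph.measurableEmbedding
      simp only [charFun_apply, hO.integral_map, LinearIsometryEquiv.inner_map_map]

variable [SecondCountableTopology E]

lemma integrable_cexp_ofReal_mul_I {Ω : Type*} [MeasurableSpace Ω] {P : Measure Ω}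
    [IsFiniteMeasure P] {f : Ω → ℝ} (hf : Measurable f) :
    Integrable (fun ω ↦ Complex.exp (f ω * Complex.I)) P :=
  .of_bound (C := 1) (by fun_prop) <| .of_forall fun ω ↦ (Complex.norm_exp_ofReal_mul_I _).le

lemma integral_charFun_smul_comm [IsFiniteMeasure μ] [IsFiniteMeasure ν] (r : ℝ) :
    ∫ y, charFun μ (r • y) ∂ν = ∫ x, charFun ν (r • x) ∂μ := by
  simp only [charFun_apply]
  rw [integral_integral_swap (integrable_cexp_ofReal_mul_I (by fun_prop))]
  simp only [real_inner_smul_right, real_inner_comm]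

theorem IsRotationInvariant.map_norm_smul_prod [CompleteSpace E] [IsProbabilityMeasure μ]
    [IsProbabilityMeasure ν] (hμ : IsRotationInvariant μ) (hν : IsRotationInvariant ν)
    (hsph : ∀ᵐ x ∂μ, ‖x‖ = 1) :
    (ν.prod μ).map (fun p ↦ ‖p.1‖ • p.2) = ν := by
  have hmeas : Measurable fun p : E × E ↦ ‖p.1‖ • p.2 := by fun_prop
  have := Measure.isProbabilityMeasure_map (μ := ν.prod μ) hmeas.aemeasurable
  refine Measure.ext_of_charFun (funext fun ξ ↦ ?_)
  calc charFun ((ν.prod μ).map fun p ↦ ‖p.1‖ • p.2) ξ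
      = ∫ g, charFun μ (‖g‖ • ξ) ∂ν := by
        rw [charFun_apply, integral_map hmeas.aemeasurable (by fun_prop),
          integral_prod _ (integrable_cexp_ofReal_mul_I (by fun_prop))]
        simp only [charFun_apply, real_inner_smul_left, real_inner_smul_right]
    _ = ∫ g, charFun μ (‖ξ‖ • g) ∂ν := by
        refine integral_congr_ae (.of_forall fun g ↦ hμ.charFun_eq_of_norm_eq ?_)
        simp only [norm_smul, norm_norm, mul_comm]
    _ = ∫ x, charFun ν (‖ξ‖ • x) ∂μ := integral_charFun_smul_comm _
    _ = ∫ _, charFun ν ξ ∂μ := by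
        refine integral_congr_ae ?_
        filter_upwards [hsph] with x hx
        exact hν.charFun_eq_of_norm_eq (by rw [norm_smul, norm_norm, hx, mul_one])
    _ = charFun ν ξ := by simp

lemma IsRotationInvariant.measureReal_le_of_smul_mem [CompleteSpace E] [IsProbabilityMeasure μ]
    [IsProbabilityMeasure ν] (hμ : IsRotationInvariant μ) (hν : IsRotationInvariant ν)
    (hsph : ∀ᵐ x ∂μ, ‖x‖ = 1) {s : Set E} (hs : MeasurableSet s)
    (hcone : ∀ r : ℝ, 0 ≤ r → ∀ x ∈ s, r • x ∈ s) : μ.real s ≤ ν.real s := by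
  calc μ.real s = (ν.prod μ).real (Set.univ ×ˢ s) := by simp
    _ ≤ (ν.prod μ).real ((fun p ↦ ‖p.1‖ • p.2) ⁻¹' s) :=
        measureReal_mono fun p hp ↦ hcone _ (norm_nonneg p.1) p.2 hp.2
    _ = ν.real s := by
        rw [← map_measureReal_apply (by fun_prop) hs, hμ.map_norm_smul_prod hν hsph]

end RotationInvariance

section GaussianQuadraticForm

open ProbabilityTheory Real

lemma one_le_one_sub_mul_exp_add_sq {u : ℝ} (hu : |u| ≤ 1 / 2) :
    1 ≤ (1 - u) * exp (u + u ^ 2) := by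
  obtain ⟨hl, hr⟩ := abs_le.1 hu
  have hpos : 0 ≤ 1 - u := by linarith
  rcases le_total 0 u with h | h
  · calc 1 ≤ 1 + u ^ 2 * ((1 - u - u ^ 2 - u ^ 3) / 2) :=
          le_add_of_nonneg_right (mul_nonneg (sq_nonneg u) (by nlinarith [pow_le_pow_left₀ h hr 3]))
      _ = (1 - u) * (1 + (u + u ^ 2) + (u + u ^ 2) ^ 2 / 2) := by ring
      _ ≤ (1 - u) * exp (u + u ^ 2) := by gcongr; exact quadratic_le_exp_of_nonneg (by positivity)
  · calc 1 ≤ 1 + -u * u ^ 2 :=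
          le_add_of_nonneg_right (mul_nonneg (neg_nonneg.2 h) (sq_nonneg u))
      _ = (1 - u) * (u + u ^ 2 + 1) := by ring
      _ ≤ (1 - u) * exp (u + u ^ 2) := by gcongr; exact add_one_le_exp _

lemma gaussianPDFReal_zero_one_mul_exp_mul_sq (s x : ℝ) :
    gaussianPDFReal 0 1 x * exp (s * x ^ 2) = (√(2 * π))⁻¹ * exp (-(1 / 2 - s) * x ^ 2) := by
  simp only [gaussianPDFReal_def, NNReal.coe_one, mul_one, sub_zero]
  rw [mul_assoc, ← exp_add]
  ring_nf

lemma integrable_exp_mul_sq_gaussianReal {s : ℝ} (hs : s < 1 / 2) :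
    Integrable (fun x ↦ exp (s * x ^ 2)) (gaussianReal 0 1) := by
  rw [gaussianReal_of_var_ne_zero 0 one_ne_zero,
    integrable_withDensity_iff_integrable_smul' (measurable_gaussianPDF 0 1)
      (.of_forall fun _ ↦ gaussianPDF_lt_top)]
  simp only [toReal_gaussianPDF, smul_eq_mul, gaussianPDFReal_zero_one_mul_exp_mul_sq]
  exact (integrable_exp_neg_mul_sq (by linarith)).const_mul _

lemma integral_exp_mul_sq_gaussianReal {s : ℝ} (hs : s < 1 / 2) :
    ∫ x, exp (s * x ^ 2) ∂(gaussianReal 0 1) = (√(1 - 2 * s))⁻¹ := by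
  have : 1 - 2 * s ≠ 0 := by linarith
  have hhalf : 1 / 2 - s = (1 - 2 * s) / 2 := by ring
  rw [integral_gaussianReal_eq_integral_smul one_ne_zero]
  simp only [smul_eq_mul, gaussianPDFReal_zero_one_mul_exp_mul_sq]
  rw [integral_const_mul, integral_gaussian, hhalf, ← sqrt_inv, ← sqrt_mul (by positivity),
    ← sqrt_inv]
  field_simp

lemma integral_exp_mul_sq_gaussianReal_le {s : ℝ} (hs : |s| ≤ 1 / 4) :
    ∫ x, exp (s * x ^ 2) ∂(gaussianReal 0 1) ≤ exp (s + 2 * s ^ 2) := by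
  have hs' : s < 1 / 2 := by linarith [le_abs_self s]
  rw [integral_exp_mul_sq_gaussianReal hs', ← sqrt_inv, sqrt_le_left (exp_pos _).le,
    inv_le_iff_one_le_mul₀' (by linarith)]
  calc 1 ≤ (1 - 2 * s) * exp (2 * s + (2 * s) ^ 2) :=
        one_le_one_sub_mul_exp_add_sq (by rw [abs_mul, abs_two]; linarith)
    _ = (1 - 2 * s) * exp (s + 2 * s ^ 2) ^ 2 := by rw [← exp_nat_mul]; push_cast; ring_nf

variable {ι : Type*} [Fintype ι] {d : ι → ℝ}

lemma integrable_exp_sum_mul_sq_stdGaussian (hd : ∀ i, d i < 1 / 2) :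
    Integrable (fun x ↦ exp (∑ i, d i * x i ^ 2)) (stdGaussian (EuclideanSpace ℝ ι)) := by
  rw [← map_pi_eq_stdGaussian, integrable_map_measure (by fun_prop) (by fun_prop)]
  simp only [Function.comp_def, exp_sum]
  exact .fintype_prod fun i ↦ integrable_exp_mul_sq_gaussianReal (hd i)

lemma integral_exp_sum_mul_sq_stdGaussian (d : ι → ℝ) :
    ∫ x, exp (∑ i, d i * x i ^ 2) ∂(stdGaussian (EuclideanSpace ℝ ι)) =
      ∏ i, ∫ y, exp (d i * y ^ 2) ∂(gaussianReal 0 1) := by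
  rw [← map_pi_eq_stdGaussian, integral_map (by fun_prop) (by fun_prop)]
  simp only [exp_sum]
  exact integral_fintype_prod_eq_prod fun i y ↦ exp (d i * y ^ 2)

theorem stdGaussian_real_sum_mul_sq_nonneg_le (hd : ∀ i, |d i| ≤ 1 / 4) :
    (stdGaussian (EuclideanSpace ℝ ι)).real {x | 0 ≤ ∑ i, d i * x i ^ 2} ≤
      exp (∑ i, (d i + 2 * d i ^ 2)) := by
  have hint := integrable_exp_sum_mul_sq_stdGaussian fun i ↦
    (le_abs_self (d i)).trans_lt ((hd i).trans_lt (by norm_num))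
  have hchernoff := measure_ge_le_exp_mul_mgf (μ := stdGaussian (EuclideanSpace ℝ ι))
    (X := fun x ↦ ∑ i, d i * x i ^ 2) 0 zero_le_one (by simpa only [one_mul] using hint)
  simp only [mul_zero, exp_zero, one_mul, mgf] at hchernoff
  rw [integral_exp_sum_mul_sq_stdGaussian] at hchernoff
  rw [exp_sum]
  exact hchernoff.trans <| Finset.prod_le_prod (fun _ _ ↦ integral_nonneg fun _ ↦ (exp_pos _).le)
    fun i _ ↦ integral_exp_mul_sq_gaussianReal_le (hd i)

end GaussianQuadraticForm

section Sphere

open ProbabilityTheory Real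

variable {ι : Type*} [Fintype ι] {μ : Measure (EuclideanSpace ℝ ι)} [IsProbabilityMeasure μ]
  {a b : ι → ℝ} {ε t : ℝ}

lemma sum_sub_const_mul_sq_of_norm_eq_one {x : EuclideanSpace ℝ ι} (hx : ‖x‖ = 1) (b : ι → ℝ)
    (r : ℝ) : ∑ i, (b i - r) * x i ^ 2 = ∑ i, b i * x i ^ 2 - r := by
  have hsum : ∑ i, x i ^ 2 = 1 := by rw [← EuclideanSpace.real_norm_sq_eq, hx, one_pow]
  simp only [sub_mul, Finset.sum_sub_distrib, ← Finset.mul_sum, hsum, mul_one]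

lemma sum_mul_sq_le_one_of_norm_eq_one {x : EuclideanSpace ℝ ι} (hx : ‖x‖ = 1)
    (hb : ∀ i, b i ≤ 1) : ∑ i, b i * x i ^ 2 ≤ 1 := by
  rw [← sub_nonpos, ← sum_sub_const_mul_sq_of_norm_eq_one hx]
  exact Finset.sum_nonpos fun i _ ↦
    mul_nonpos_of_nonpos_of_nonneg (sub_nonpos.2 (hb i)) (sq_nonneg _)

lemma IsRotationInvariant.measureReal_sum_mul_sq_nonneg_le (hμ : IsRotationInvariant μ)
    (hsph : ∀ᵐ x ∂μ, ‖x‖ = 1) (hb : ∀ i, |b i| ≤ 1 / 4) :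
    μ.real {x | 0 ≤ ∑ i, b i * x i ^ 2} ≤ exp (∑ i, (b i + 2 * b i ^ 2)) := by
  refine (hμ.measureReal_le_of_smul_mem isRotationInvariant_stdGaussian hsph
    (measurableSet_le (by fun_prop) (by fun_prop)) fun r _ x hx ↦ ?_).trans
    (stdGaussian_real_sum_mul_sq_nonneg_le hb)
  calc 0 ≤ r ^ 2 * ∑ i, b i * x i ^ 2 := mul_nonneg (sq_nonneg r) hx
    _ = ∑ i, b i * (r • x) i ^ 2 := by
      simp only [Finset.mul_sum, PiLp.smul_apply, smul_eq_mul, mul_pow, mul_left_comm]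

/- Chernoff's bound is applied to the weights `s (bᵢ - ε)`, whose sum is `-s n ε` and whose squares
add up to at most `2 s² n`; the choice `s = ε / 8` minimizes `-s n ε + 4 s² n`. -/
lemma IsRotationInvariant.measureReal_le_sum_mul_sq_le_of_le_one (hμ : IsRotationInvariant μ)
    (hsph : ∀ᵐ x ∂μ, ‖x‖ = 1) (hsum : ∑ i, b i = 0) (hb : ∀ i, |b i| ≤ 1) (hε : 0 ≤ ε)
    (hε1 : ε ≤ 1) :
    μ.real {x | ε ≤ ∑ i, b i * x i ^ 2} ≤ exp (-(Fintype.card ι * ε ^ 2 / 16)) := by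
  have hweight (i) : |ε / 8 * (b i - ε)| ≤ 1 / 4 := by
    rw [abs_mul, abs_of_nonneg (by positivity)]
    have : |b i - ε| ≤ 2 := by linarith [abs_sub (b i) ε, hb i, abs_of_nonneg hε]
    nlinarith
  have hevent : ∀ᵐ x ∂μ, ε ≤ ∑ i, b i * x i ^ 2 → 0 ≤ ∑ i, ε / 8 * (b i - ε) * x i ^ 2 := by
    filter_upwards [hsph] with x hx h
    simp only [mul_assoc, ← Finset.mul_sum]
    rw [sum_sub_const_mul_sq_of_norm_eq_one hx]
    exact mul_nonneg (by positivity) (sub_nonneg.2 h)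
  have hexponent (i) : ε / 8 * (b i - ε) + 2 * (ε / 8 * (b i - ε)) ^ 2 ≤
      (ε / 8 - ε ^ 3 / 16) * b i - ε ^ 2 / 16 := by
    have hbsq : b i ^ 2 ≤ 1 := (sq_le_one_iff_abs_le_one _).2 (hb i)
    have hεsq : ε ^ 2 ≤ 1 := pow_le_one₀ hε hε1
    nlinarith [mul_nonneg (sq_nonneg ε) (by linarith : 0 ≤ 2 - b i ^ 2 - ε ^ 2)]
  calc μ.real {x | ε ≤ ∑ i, b i * x i ^ 2}
      ≤ μ.real {x | 0 ≤ ∑ i, ε / 8 * (b i - ε) * x i ^ 2} :=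
        ENNReal.toReal_mono (measure_ne_top _ _) (measure_mono_ae hevent)
    _ ≤ exp (∑ i, (ε / 8 * (b i - ε) + 2 * (ε / 8 * (b i - ε)) ^ 2)) :=
        hμ.measureReal_sum_mul_sq_nonneg_le hsph hweight
    _ ≤ exp (∑ i, ((ε / 8 - ε ^ 3 / 16) * b i - ε ^ 2 / 16)) := by gcongr; exact hexponent _
    _ = exp (-(Fintype.card ι * ε ^ 2 / 16)) := by
        rw [Finset.sum_sub_distrib, ← Finset.mul_sum, hsum, Finset.sum_const, Finset.card_univ,
          nsmul_eq_mul]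
        ring_nf

lemma IsRotationInvariant.measureReal_le_sum_mul_sq_le (hμ : IsRotationInvariant μ)
    (hsph : ∀ᵐ x ∂μ, ‖x‖ = 1) (hsum : ∑ i, b i = 0) (hb : ∀ i, |b i| ≤ 1) (hε : 0 ≤ ε) :
    μ.real {x | ε ≤ ∑ i, b i * x i ^ 2} ≤ exp (-(Fintype.card ι * ε ^ 2 / 16)) := by
  rcases le_or_gt ε 1 with hε1 | hε1
  · exact hμ.measureReal_le_sum_mul_sq_le_of_le_one hsph hsum hb hε hε1
  · have hnull : μ {x | ε ≤ ∑ i, b i * x i ^ 2} = 0 := by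
      rw [measure_eq_zero_iff_ae_notMem]
      filter_upwards [hsph] with x hx
      have hle := sum_mul_sq_le_one_of_norm_eq_one hx fun i ↦ (abs_le.1 (hb i)).2
      exact not_le.2 (hle.trans_lt hε1)
    rw [measureReal_def, hnull, ENNReal.toReal_zero]
    exact (exp_pos _).le

theorem IsRotationInvariant.measureReal_le_abs_sum_mul_sq_le (hμ : IsRotationInvariant μ)
    (hsph : ∀ᵐ x ∂μ, ‖x‖ = 1) (hsum : ∑ i, b i = 0) (hb : ∀ i, |b i| ≤ 1) (hε : 0 ≤ ε) :
    μ.real {x | ε ≤ |∑ i, b i * x i ^ 2|} ≤ 2 * exp (-(Fintype.card ι * ε ^ 2 / 16)) := by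
  have hneg := hμ.measureReal_le_sum_mul_sq_le hsph (b := -b) (by simp [hsum])
    (by simpa using hb) hε
  simp only [Pi.neg_apply, neg_mul, Finset.sum_neg_distrib] at hneg
  simp only [le_abs, Set.ofPred_or]
  linarith [measureReal_union_le (μ := μ) {x | ε ≤ ∑ i, b i * x i ^ 2}
    {x | ε ≤ -∑ i, b i * x i ^ 2}, hμ.measureReal_le_sum_mul_sq_le hsph hsum hb hε]

lemma nonempty_of_ae_norm_eq_one (hsph : ∀ᵐ x ∂μ, ‖x‖ = 1) : Nonempty ι := by
  obtain ⟨x, hx⟩ := hsph.exists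
  by_contra! h
  simp [Subsingleton.elim x 0] at hx

lemma abs_sub_sum_div_card_le_one (ha : ∀ i, a i ∈ Set.Icc 0 1) (i : ι) :
    |a i - (∑ j, a j) / Fintype.card ι| ≤ 1 := by
  have hmean0 : 0 ≤ (∑ j, a j) / Fintype.card ι :=
    div_nonneg (Finset.sum_nonneg fun j _ ↦ (ha j).1) (Nat.cast_nonneg _)
  have hmean1 : (∑ j, a j) / Fintype.card ι ≤ 1 :=
    div_le_one_of_le₀ (by simpa using Finset.sum_le_sum fun j (_ : j ∈ Finset.univ) ↦ (ha j).2)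
      (Nat.cast_nonneg _)
  exact abs_le.2 ⟨by linarith [(ha i).1], by linarith [(ha i).2]⟩

theorem stmt5_general (hμ : IsRotationInvariant μ) (hsph : ∀ᵐ x ∂μ, ‖x‖ = 1)
    (ha : ∀ i, a i ∈ Set.Icc 0 1) (ht : 0 ≤ t) :
    1 - 2 * exp (-t) ≤ μ.real {x | |∑ i, a i * x i ^ 2 - (∑ i, a i) / Fintype.card ι| ≤
      4 / Fintype.card ι * √(Fintype.card ι * t)} := by
  have := nonempty_of_ae_norm_eq_one hsph
  set n : ℝ := (Fintype.card ι : ℝ) with hn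
  have hn0 : 0 < n := by positivity
  set A := {x : EuclideanSpace ℝ ι | |∑ i, a i * x i ^ 2 - (∑ i, a i) / n| ≤ 4 / n * √(n * t)}
  have hA : MeasurableSet A := measurableSet_le (by fun_prop) (by fun_prop)
  have hcentered : ∑ i, (a i - (∑ j, a j) / n) = 0 := by
    rw [Finset.sum_sub_distrib, Finset.sum_const, Finset.card_univ, nsmul_eq_mul, ← hn,
      mul_div_cancel₀ _ hn0.ne', sub_self]
  have hevent : ∀ᵐ x ∂μ, x ∈ Aᶜ →
      4 / n * √(n * t) ≤ |∑ i, (a i - (∑ j, a j) / n) * x i ^ 2| := by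
    filter_upwards [hsph] with x hx hxA
    rw [sum_sub_const_mul_sq_of_norm_eq_one hx]
    exact le_of_not_ge hxA
  have hexponent : n * (4 / n * √(n * t)) ^ 2 / 16 = t := by
    rw [mul_pow, sq_sqrt (by positivity)]
    field_simp
    ring
  have hcompl : μ.real Aᶜ ≤ 2 * exp (-t) :=
    calc μ.real Aᶜ ≤ _ := ENNReal.toReal_mono (measure_ne_top _ _) (measure_mono_ae hevent)
      _ ≤ 2 * exp (-(n * (4 / n * √(n * t)) ^ 2 / 16)) :=
        hμ.measureReal_le_abs_sum_mul_sq_le hsph hcentered (abs_sub_sum_div_card_le_one ha)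
          (by positivity)
      _ = 2 * exp (-t) := by rw [hexponent]
  linarith [probReal_compl_eq_one_sub (μ := μ) hA]

end Sphere

lemma IsUniformOnSphere.ae_norm_eq_one {n : ℕ} {μ : Measure (EuclideanSpace ℝ (Fin n))}
    (hμ : IsUniformOnSphere μ) : ∀ᵐ x ∂μ, ‖x‖ = 1 := by
  have := hμ.1
  filter_upwards [(mem_ae_iff_prob_eq_one Metric.isClosed_sphere.measurableSet).2 hμ.2.1] with x hx
  exact mem_sphere_zero_iff_norm.1 hx

lemma IsUniformOnSphere.isRotationInvariant {n : ℕ} {μ : Measure (EuclideanSpace ℝ (Fin n))}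
    (hμ : IsUniformOnSphere μ) : IsRotationInvariant μ :=
  hμ.2.2

/-- concentration of `‖v‖_S²`.  There is an absolute constant `c > 0` such
that for every `n`, every `S ⊆ {1,…,n}`, every `v` uniform on `S^{n-1}`, and every `t > 0`,
with probability at least `1 - exp(-cn) - 4 exp(-t)` one has
`|‖v‖_S² - |S|/n| ≤ (8/n)(√(nt) + t)`. -/
theorem stmt5 :
    ∃ c : ℝ, 0 < c ∧
      ∀ (n : ℕ) (μ : Measure (EuclideanSpace ℝ (Fin n))),
        IsUniformOnSphere μ →
        ∀ S : Finset (Fin n), ∀ t : ℝ, 0 < t →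
          ENNReal.ofReal (1 - Real.exp (-(c * n)) - 4 * Real.exp (-t)) ≤
            μ {x | |(∑ i ∈ S, x i ^ 2) - (S.card : ℝ) / n| ≤
                (8 / n) * (Real.sqrt (n * t) + t)} := by
  refine ⟨1, one_pos, fun n μ hμ S t ht ↦ ENNReal.ofReal_le_of_le_toReal ?_⟩
  have := hμ.1
  have hweights (i : Fin n) : (if i ∈ S then 1 else 0 : ℝ) ∈ Set.Icc 0 1 := by
    split_ifs <;> simp
  have hmain := stmt5_general hμ.isRotationInvariant hμ.ae_norm_eq_one hweights ht.le
  simp only [ite_mul, one_mul, zero_mul, Finset.sum_ite_mem, Finset.univ_inter, Finset.sum_const,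
    nsmul_eq_mul, mul_one, Fintype.card_fin] at hmain
  have hprob : 1 - Real.exp (-(1 * n)) - 4 * Real.exp (-t) ≤ 1 - 2 * Real.exp (-t) := by
    linarith [Real.exp_pos (-(1 * n)), Real.exp_pos (-t)]
  have hradius : 4 / n * √(n * t) ≤ 8 / n * (√(n * t) + t) := by
    gcongr <;> linarith
  exact hprob.trans (hmain.trans (measureReal_mono fun x hx ↦ hx.trans hradius))
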